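/- (Classical form of Lemma 2, the primal Linear Operator Inequality.) Let a, b, c be polynomial functions with a(x) ≥ α > 0 on [0,1], let ε1 > 0, and let N, P1, P2 be polynomial functions with P2(x,ξ) = P1(ξ,x) and N(x) ≥ ε1 on [0,1]. Define the operator (Sw)(x) = N(x)w(x) + ∫₀^x P1(x,ξ)w(ξ)dξ + ∫_x^1 P2(x,ξ)w(ξ)dξ, and the functions Q0,…,Q8 by: Q0(x) = d/dx[d/dx(a(x)N(x)) − b(x)N(x)] + 2·[∂/∂x (a(x)(P1(x,ξ) − P2(x,ξ)))]evaluated at ξ = x + 2N(x)c(x) − (π²/2)αε1; Q1(x,ξ) = ∂/∂x[∂/∂x(a(x)P1(x,ξ)) − b(x)P1(x,ξ)] + ∂/∂ξ[∂/∂ξ(a(ξ)P1(x,ξ)) − b(ξ)P1(x,ξ)] + (c(x) + c(ξ))P1(x,ξ); Q2(x,ξ) = Q1(ξ,x); Q3 = (a'(0) − b(0))N(0) + a(0)N'(0) − (π²/2)αε1; Q4(x) = 2(a'(0) − b(0))P2(0,x) + 2a(0)·∂P2/∂x(0,x) + π²αε1; Q5 = (b(1) − a'(1))N(1) − a(1)N'(1);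 Q6(x) = 2(b(1) − a'(1))P1(1,x) − 2a(1)·∂P1/∂x(1,x); Q7 = 2a(1)N(1); Q8(x) = 2a(1)P1(1,x); and the operator (Qw)(x) = Q0(x)w(x) + ∫₀^x Q1(x,ξ)w(ξ)dξ + ∫_x^1 Q2(x,ξ)w(ξ)dξ. Then for every twice continuously differentiable w : [0,1] → ℝ with w'(0) = 0, we have 2∫₀¹ [a(x)w''(x) + b(x)w'(x) + c(x)w(x)]·(Sw)(x) dx ≤ ∫₀¹ (Qw)(x) w(x) dx + w(0)·(Q3·w(0) + ∫₀¹ Q4(x)w(x)dx) + w(1)·(Q5·w(1) + ∫₀¹ Q6(x)w(x)dx) + w'(1)·(Q7·w(1) + ∫₀¹ Q8(x)w(x)dx). -/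

import Mathlib

open MeasureTheory Real

noncomputable section

/-- `f` is (the restriction of) a polynomial function. -/
def IsPolyFun (f : ℝ → ℝ) : Prop := ∃ p : Polynomial ℝ, ∀ x, f x = p.eval x

/-- `f` is (the restriction of) a polynomial function of two variables. -/
def IsPolyFun2 (f : ℝ → ℝ → ℝ) : Prop :=
  ∃ p : MvPolynomial (Fin 2) ℝ, ∀ x y, f x y = MvPolynomial.eval ![x, y] p

/-- The semi-separable kernel operator
`(Sw)(x) = N(x)w(x) + ∫₀ˣ P1(x,ξ)w(ξ)dξ + ∫ₓ¹ P2(x,ξ)w(ξ)dξ`. -/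
def semisepOp (N : ℝ → ℝ) (P1 P2 : ℝ → ℝ → ℝ) (w : ℝ → ℝ) : ℝ → ℝ :=
  fun x => N x * w x + (∫ ξ in (0:ℝ)..x, P1 x ξ * w ξ)
    + ∫ ξ in x..(1:ℝ), P2 x ξ * w ξ

/-!
Write `A` for the differential operator, `A*` for its formal adjoint and `S = N + K` with `K` the
integral part. Green's formula for the pair `N`, `w²` turns `2⟨Aw, Nw⟩` into a quadratic form in
`w`, boundary terms and the dissipation `-2 ∫ a N w'²`. The two kernels of `K` agree on the
diagonal, so `Kw` is twice differentiable and Green's formula for the pair `Kw`, `w` applies: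
`A*` falls on the kernels, and exchanging the order of integration over the triangle `ξ ≤ x`
symmetrises the result. Finally `a N ≥ α ε1`, and Wirtinger's inequality for `w - w(0)` bounds the
dissipation by `-(π²/2) α ε1 ∫ (w - w(0))²`, whose expansion gives the `π²` terms of `Q0`, `Q3`
and `Q4`.
-/

open Function (uncurry)

section Leibniz

variable {E : Type*} [NormedAddCommGroup E] [NormedSpace ℝ E]

lemma hasDerivAt_intervalIntegral_of_continuous {F F' : ℝ → ℝ → E}
    (hFF' : ∀ x ξ, HasDerivAt (fun t => F t ξ) (F' x ξ) x) (hF : Continuous (uncurry F))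
    (hF' : Continuous (uncurry F')) (l r x : ℝ) :
    HasDerivAt (fun t => ∫ ξ in l..r, F t ξ) (∫ ξ in l..r, F' x ξ) x := by
  obtain ⟨M, hM⟩ := ((isCompact_closedBall x 1).prod (isCompact_uIcc (a := l) (b := r))
    ).exists_bound_of_continuousOn hF'.continuousOn
  refine (intervalIntegral.hasDerivAt_integral_of_dominated_loc_of_deriv_le
    (bound := fun _ => M) (Metric.closedBall_mem_nhds x one_pos) ?_ ?_ ?_ ?_ ?_ ?_).2
  · exact .of_forall fun t => (hF.uncurry_left t).aestronglyMeasurable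
  · exact (hF.uncurry_left x).intervalIntegrable l r
  · exact (hF'.uncurry_left x).aestronglyMeasurable
  · exact .of_forall fun ξ hξ t ht => hM (t, ξ) ⟨ht, Set.uIoc_subset_uIcc hξ⟩
  · exact intervalIntegrable_const
  · exact .of_forall fun ξ _ t _ => hFF' t ξ

variable [CompleteSpace E]

-- Chain rule along `t ↦ (t, t)` for `(s, t) ↦ ∫ ξ in l..t, F s ξ`.
theorem hasDerivAt_integral_variable_right {F F' : ℝ → ℝ → E}
    (hFF' : ∀ x ξ, HasDerivAt (fun t => F t ξ) (F' x ξ) x) (hF : Continuous (uncurry F))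
    (hF' : Continuous (uncurry F')) (l x : ℝ) :
    HasDerivAt (fun t => ∫ ξ in l..t, F t ξ) (F x x + ∫ ξ in l..x, F' x ξ) x := by
  have hpartial₁ : ∀ v : ℝ × ℝ, HasFDerivAt (fun s => ∫ ξ in l..v.2, F s ξ)
      (ContinuousLinearMap.toSpanSingleton ℝ (∫ ξ in l..v.2, F' v.1 ξ)) v.1 := fun v =>
    (hasDerivAt_intervalIntegral_of_continuous hFF' hF hF' l v.2 v.1).hasFDerivAt
  have hpartial₂ : ∀ v : ℝ × ℝ, HasFDerivAt (fun t => ∫ ξ in l..t, F v.1 ξ)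
      (ContinuousLinearMap.toSpanSingleton ℝ (F v.1 v.2)) v.2 := fun v =>
    ((hF.uncurry_left v.1).integral_hasStrictDerivAt l v.2).hasDerivAt.hasFDerivAt
  have hspan : Continuous fun v : E => ContinuousLinearMap.toSpanSingleton ℝ v :=
    (ContinuousLinearMap.toSpanSingletonCLE (𝕜 := ℝ) (E := E)).continuous
  have hjoint := hasStrictFDerivAt_uncurry_coprod (u := (x, x))
    (f := fun s t => ∫ ξ in l..t, F s ξ)
    (f₁ := fun s t => ContinuousLinearMap.toSpanSingleton ℝ (∫ ξ in l..t, F' s ξ))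
    (f₂ := fun s t => ContinuousLinearMap.toSpanSingleton ℝ (F s t))
    (.of_forall hpartial₁) (.of_forall hpartial₂)
    (hspan.comp (intervalIntegral.continuous_parametric_primitive_of_continuous hF')).continuousAt
    (hspan.comp hF).continuousAt
  simpa [Function.HasUncurry.uncurry, Function.comp_def, add_comm] using
    hjoint.hasFDerivAt.comp_hasDerivAt (f := fun t => (t, t)) x
      ((hasDerivAt_id x).prodMk (hasDerivAt_id x))

theorem integral_integral_triangle_swap {F : ℝ → ℝ → E} (hF : Continuous (uncurry F)) (l r : ℝ) :
    ∫ x in l..r, ∫ ξ in l..x, F x ξ = ∫ x in l..r, ∫ ξ in x..r, F ξ x := by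
  have hsection : ∀ x, Continuous fun ξ => F ξ x := fun x => hF.uncurry_right x
  have hinner : Continuous (uncurry fun t x => ∫ ξ in x..t, F ξ x) := by
    have hprimitive := intervalIntegral.continuous_parametric_primitive_of_continuous
      (μ := volume) (a₀ := l) (f := fun x ξ => F ξ x) (hF.comp continuous_swap)
    refine ((hprimitive.comp continuous_swap).sub
      (hprimitive.comp (continuous_snd.prodMk continuous_snd))).congr fun z => ?_
    exact intervalIntegral.integral_interval_sub_left
      ((hsection z.2).intervalIntegrable _ _) ((hsection z.2).intervalIntegrable _ _)
  have hderiv : ∀ t, HasDerivAt (fun t => ∫ x in l..t, ∫ ξ in x..t, F ξ x)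
      (∫ x in l..t, F t x) t := fun t => by
    simpa using hasDerivAt_integral_variable_right
      (fun t x => ((hsection x).integral_hasStrictDerivAt x t).hasDerivAt) hinner hF l t
  have hcont : Continuous fun t => ∫ x in l..t, F t x :=
    intervalIntegral.continuous_parametric_intervalIntegral_of_continuous hF continuous_id
  simpa using intervalIntegral.integral_eq_sub_of_hasDerivAt (fun t _ => hderiv t)
    (hcont.intervalIntegrable l r)

end Leibniz

section Wirtinger

-- Completing the square: `(f' - φ f)² ≥ 0`, and `2 φ f f' = (φ f²)' - φ' f²`.
lemma integral_neg_deriv_sub_sq_mul_sq_le {f f' φ φ' : ℝ → ℝ} {l r : ℝ} (hlr : l ≤ r)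
    (hf : ∀ x ∈ Set.Icc l r, HasDerivAt f (f' x) x) (hf' : ContinuousOn f' (Set.Icc l r))
    (hφ : ∀ x ∈ Set.Icc l r, HasDerivAt φ (φ' x) x) (hφ' : ContinuousOn φ' (Set.Icc l r)) :
    (∫ x in l..r, (-φ' x - φ x ^ 2) * f x ^ 2) + (φ r * f r ^ 2 - φ l * f l ^ 2)
      ≤ ∫ x in l..r, f' x ^ 2 := by
  have hfc : ContinuousOn f (Set.Icc l r) := HasDerivAt.continuousOn hf
  have hφc : ContinuousOn φ (Set.Icc l r) := HasDerivAt.continuousOn hφ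
  rw [← Set.uIcc_of_le hlr] at hf hf' hφ hφ' hfc hφc
  have hftc : ∫ x in l..r, (φ' x * f x ^ 2 + φ x * (2 * f x * f' x))
      = φ r * f r ^ 2 - φ l * f l ^ 2 := by
    refine intervalIntegral.integral_eq_sub_of_hasDerivAt (f := fun x => φ x * f x ^ 2)
      (fun x hx => ?_) (ContinuousOn.intervalIntegrable (by fun_prop))
    simpa using (hφ x hx).fun_mul ((hf x hx).fun_pow 2)
  rw [← hftc, ← intervalIntegral.integral_add (ContinuousOn.intervalIntegrable (by fun_prop))
    (ContinuousOn.intervalIntegrable (by fun_prop))]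
  refine intervalIntegral.integral_mono_on hlr (ContinuousOn.intervalIntegrable (by fun_prop))
    (ContinuousOn.intervalIntegrable (by fun_prop)) fun x _ => ?_
  linarith [sq_nonneg (f' x - φ x * f x)]

-- `φ x = k tan (k (r - x))` solves the Riccati equation `-φ' - φ² = k²` with `φ r = 0`.
lemma sq_mul_integral_sq_le_of_mul_lt_pi_div_two {f f' : ℝ → ℝ} {l r k : ℝ} (hlr : l ≤ r)
    (hf : ∀ x ∈ Set.Icc l r, HasDerivAt f (f' x) x) (hf' : ContinuousOn f' (Set.Icc l r))
    (hfl : f l = 0) (hk : 0 ≤ k) (hkπ : k * (r - l) < π / 2) :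
    k ^ 2 * ∫ x in l..r, f x ^ 2 ≤ ∫ x in l..r, f' x ^ 2 := by
  have hcos : ∀ x ∈ Set.Icc l r, cos (k * (r - x)) ≠ 0 := fun x hx => by
    refine (cos_pos_of_mem_Ioo ⟨?_, ?_⟩).ne'
    · linarith [mul_nonneg hk (sub_nonneg.2 hx.2), pi_pos]
    · exact (mul_le_mul_of_nonneg_left (by linarith [hx.1]) hk).trans_lt hkπ
  let φ : ℝ → ℝ := fun x => k * tan (k * (r - x))
  have hφ : ∀ x ∈ Set.Icc l r, HasDerivAt φ (-k ^ 2 - φ x ^ 2) x := fun x hx => by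
    have harg : HasDerivAt (fun x => k * (r - x)) (-k) x := by
      simpa using ((hasDerivAt_id x).const_sub r).const_mul k
    refine (((hasDerivAt_tan (hcos x hx)).comp x harg).const_mul k).congr_deriv ?_
    simp only [φ, tan_eq_sin_div_cos]
    have := hcos x hx
    field_simp
    linear_combination k ^ 2 * sin_sq_add_cos_sq (k * (r - x))
  have hφc : ContinuousOn φ (Set.Icc l r) := HasDerivAt.continuousOn hφ
  simpa [φ, hfl] using integral_neg_deriv_sub_sq_mul_sq_le hlr hf hf' hφ (by fun_prop)

theorem wirtinger_inequality {f f' : ℝ → ℝ} {l r : ℝ} (hlr : l < r)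
    (hf : ∀ x ∈ Set.Icc l r, HasDerivAt f (f' x) x) (hf' : ContinuousOn f' (Set.Icc l r))
    (hfl : f l = 0) :
    (π / (2 * (r - l))) ^ 2 * ∫ x in l..r, f x ^ 2 ≤ ∫ x in l..r, f' x ^ 2 := by
  have hlen : 0 < r - l := sub_pos.2 hlr
  have hcont : Continuous fun k : ℝ => k ^ 2 * ∫ x in l..r, f x ^ 2 := by fun_prop
  refine le_of_tendsto (hcont.continuousWithinAt (s := Set.Iio (π / (2 * (r - l))))) ?_
  filter_upwards [Ioo_mem_nhdsLT (show 0 < π / (2 * (r - l)) by positivity)] with k hk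
  refine sq_mul_integral_sq_le_of_mul_lt_pi_div_two hlr.le hf hf' hfl hk.1.le ?_
  calc k * (r - l) < π / (2 * (r - l)) * (r - l) := mul_lt_mul_of_pos_right hk.2 hlen
    _ = π / 2 := by field_simp

end Wirtinger

section KernelOperator

/-- The partial derivative `∂P/∂x` of a kernel `P(x, ξ)` in its first variable. -/
def partialFst (P : ℝ → ℝ → ℝ) (x ξ : ℝ) : ℝ := deriv (fun t => P t ξ) x

/-- The integral part `∫ₗˣ P1(x,ξ)w(ξ)dξ + ∫ₓʳ P2(x,ξ)w(ξ)dξ` of a semi-separable kernel operator,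
on an arbitrary interval `[l, r]`. -/
def kernelOp (l r : ℝ) (P1 P2 : ℝ → ℝ → ℝ) (w : ℝ → ℝ) (x : ℝ) : ℝ :=
  (∫ ξ in l..x, P1 x ξ * w ξ) + ∫ ξ in x..r, P2 x ξ * w ξ

variable {l r x : ℝ} {P P1 P2 Q1 Q2 : ℝ → ℝ → ℝ} {f v w : ℝ → ℝ}

lemma hasDerivAt_partialFst (hP : ContDiff ℝ 1 (uncurry P)) (x ξ : ℝ) :
    HasDerivAt (fun t => P t ξ) (partialFst P x ξ) x :=
  ((hP.comp (contDiff_id.prodMk contDiff_const)).differentiable one_ne_zero x).hasDerivAt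

lemma contDiff_uncurry_partialFst {n : WithTop ℕ∞} (hP : ContDiff ℝ (n + 1) (uncurry P)) :
    ContDiff ℝ n (uncurry (partialFst P)) := by
  have hswap : ContDiff ℝ (n + 1) (uncurry fun (z : ℝ × ℝ) t => P t z.2) :=
    hP.comp (contDiff_snd.prodMk (contDiff_snd.comp contDiff_fst))
  exact hswap.fderiv_apply contDiff_fst contDiff_const le_rfl

lemma continuous_uncurry_partialFst (hP : ContDiff ℝ 1 (uncurry P)) :
    Continuous (uncurry (partialFst P)) :=
  (contDiff_uncurry_partialFst (n := 0) hP).continuous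

lemma continuous_uncurry_mul (hf : Continuous f) (hP : Continuous (uncurry P)) :
    Continuous (uncurry fun x ξ => f x * P x ξ) :=
  (hf.comp continuous_fst).mul hP

lemma contDiff_uncurry_mul {n : WithTop ℕ∞} (hf : ContDiff ℝ n f) (hP : ContDiff ℝ n (uncurry P)) :
    ContDiff ℝ n (uncurry fun x ξ => f x * P x ξ) :=
  (hf.comp contDiff_fst).mul hP

lemma kernelOp_left : kernelOp l r P1 P2 w l = ∫ ξ in l..r, P2 l ξ * w ξ := by
  simp [kernelOp]

lemma kernelOp_right : kernelOp l r P1 P2 w r = ∫ ξ in l..r, P1 r ξ * w ξ := by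
  simp [kernelOp]

lemma kernelOp_mul_left (f : ℝ → ℝ) :
    kernelOp l r (fun x ξ => f x * P1 x ξ) (fun x ξ => f x * P2 x ξ) w
      = fun x => f x * kernelOp l r P1 P2 w x := by
  ext x
  simp only [kernelOp, mul_assoc, intervalIntegral.integral_const_mul, mul_add]

lemma intervalIntegrable_kernel_mul (hP : Continuous (uncurry P)) (hw : Continuous w)
    (x l r : ℝ) : IntervalIntegrable (fun ξ => P x ξ * w ξ) volume l r :=
  ((hP.uncurry_left x).mul hw).intervalIntegrable l r

lemma kernelOp_add (hP1 : Continuous (uncurry P1)) (hP2 : Continuous (uncurry P2))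
    (hQ1 : Continuous (uncurry Q1)) (hQ2 : Continuous (uncurry Q2)) (hw : Continuous w) :
    kernelOp l r (fun x ξ => P1 x ξ + Q1 x ξ) (fun x ξ => P2 x ξ + Q2 x ξ) w x
      = kernelOp l r P1 P2 w x + kernelOp l r Q1 Q2 w x := by
  simp only [kernelOp, add_mul]
  rw [intervalIntegral.integral_add (intervalIntegrable_kernel_mul hP1 hw _ _ _)
      (intervalIntegrable_kernel_mul hQ1 hw _ _ _),
    intervalIntegral.integral_add (intervalIntegrable_kernel_mul hP2 hw _ _ _)
      (intervalIntegrable_kernel_mul hQ2 hw _ _ _)]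
  ring

lemma kernelOp_sub (hP1 : Continuous (uncurry P1)) (hP2 : Continuous (uncurry P2))
    (hQ1 : Continuous (uncurry Q1)) (hQ2 : Continuous (uncurry Q2)) (hw : Continuous w) :
    kernelOp l r (fun x ξ => P1 x ξ - Q1 x ξ) (fun x ξ => P2 x ξ - Q2 x ξ) w x
      = kernelOp l r P1 P2 w x - kernelOp l r Q1 Q2 w x := by
  simp only [kernelOp, sub_mul]
  rw [intervalIntegral.integral_sub (intervalIntegrable_kernel_mul hP1 hw _ _ _)
      (intervalIntegrable_kernel_mul hQ1 hw _ _ _),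
    intervalIntegral.integral_sub (intervalIntegrable_kernel_mul hP2 hw _ _ _)
      (intervalIntegrable_kernel_mul hQ2 hw _ _ _)]
  ring

lemma continuous_integral_kernel_mul_right (hP : Continuous (uncurry P)) (hw : Continuous w)
    (l : ℝ) : Continuous fun x => ∫ ξ in l..x, P x ξ * w ξ :=
  intervalIntegral.continuous_parametric_intervalIntegral_of_continuous
    (hP.mul (hw.comp continuous_snd)) continuous_id

lemma continuous_integral_kernel_mul_left (hP : Continuous (uncurry P)) (hw : Continuous w)
    (r : ℝ) : Continuous fun x => ∫ ξ in x..r, P x ξ * w ξ :=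
  (continuous_integral_kernel_mul_right hP hw r).neg.congr fun _ =>
    (intervalIntegral.integral_symm _ _).symm

lemma continuous_kernelOp (hP1 : Continuous (uncurry P1)) (hP2 : Continuous (uncurry P2))
    (hw : Continuous w) : Continuous (kernelOp l r P1 P2 w) :=
  (continuous_integral_kernel_mul_right hP1 hw l).add
    (continuous_integral_kernel_mul_left hP2 hw r)

lemma hasDerivAt_integral_kernel_mul (hP : ContDiff ℝ 1 (uncurry P)) (hw : Continuous w)
    (l x : ℝ) :
    HasDerivAt (fun t => ∫ ξ in l..t, P t ξ * w ξ)
      (P x x * w x + ∫ ξ in l..x, partialFst P x ξ * w ξ) x :=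
  hasDerivAt_integral_variable_right
    (fun x ξ => (hasDerivAt_partialFst hP x ξ).mul_const (w ξ))
    (hP.continuous.mul (hw.comp continuous_snd))
    ((continuous_uncurry_partialFst hP).mul (hw.comp continuous_snd)) l x

theorem hasDerivAt_kernelOp (hP1 : ContDiff ℝ 1 (uncurry P1)) (hP2 : ContDiff ℝ 1 (uncurry P2))
    (hw : Continuous w) (x : ℝ) :
    HasDerivAt (kernelOp l r P1 P2 w)
      ((P1 x x - P2 x x) * w x + kernelOp l r (partialFst P1) (partialFst P2) w x) x := by
  have hright : (fun t => ∫ ξ in t..r, P2 t ξ * w ξ) = fun t => -∫ ξ in r..t, P2 t ξ * w ξ :=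
    funext fun t => intervalIntegral.integral_symm _ _
  refine ((hasDerivAt_integral_kernel_mul hP1 hw l x).fun_add
    (hright ▸ (hasDerivAt_integral_kernel_mul hP2 hw r x).fun_neg)).congr_deriv ?_
  rw [kernelOp, intervalIntegral.integral_symm x r]
  ring

lemma hasDerivAt_kernelOp_of_eq_diag (hP1 : ContDiff ℝ 1 (uncurry P1))
    (hP2 : ContDiff ℝ 1 (uncurry P2)) (hdiag : ∀ x, P1 x x = P2 x x) (hw : Continuous w) (x : ℝ) :
    HasDerivAt (kernelOp l r P1 P2 w) (kernelOp l r (partialFst P1) (partialFst P2) w x) x := by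
  simpa [hdiag] using hasDerivAt_kernelOp hP1 hP2 hw x

lemma contDiff_one_kernelOp (hP1 : ContDiff ℝ 1 (uncurry P1)) (hP2 : ContDiff ℝ 1 (uncurry P2))
    (hw : Continuous w) : ContDiff ℝ 1 (kernelOp l r P1 P2 w) := by
  have hderiv := hasDerivAt_kernelOp (l := l) (r := r) hP1 hP2 hw
  have hdiag {P : ℝ → ℝ → ℝ} (hP : ContDiff ℝ 1 (uncurry P)) : Continuous fun x => P x x :=
    hP.continuous.comp (continuous_id.prodMk continuous_id)
  rw [contDiff_one_iff_deriv, funext fun x => (hderiv x).deriv]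
  exact ⟨fun x => (hderiv x).differentiableAt,
    (((hdiag hP1).sub (hdiag hP2)).mul hw).add (continuous_kernelOp
      (continuous_uncurry_partialFst hP1) (continuous_uncurry_partialFst hP2) hw)⟩

lemma contDiff_two_kernelOp (hP1 : ContDiff ℝ 2 (uncurry P1)) (hP2 : ContDiff ℝ 2 (uncurry P2))
    (hdiag : ∀ x, P1 x x = P2 x x) (hw : Continuous w) : ContDiff ℝ 2 (kernelOp l r P1 P2 w) := by
  have hderiv := hasDerivAt_kernelOp_of_eq_diag (l := l) (r := r) (hP1.of_le one_le_two)
    (hP2.of_le one_le_two) hdiag hw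
  rw [← one_add_one_eq_two] at hP1 hP2 ⊢
  rw [contDiff_succ_iff_deriv, funext fun x => (hderiv x).deriv]
  exact ⟨fun x => (hderiv x).differentiableAt, by simp,
    contDiff_one_kernelOp (contDiff_uncurry_partialFst hP1) (contDiff_uncurry_partialFst hP2) hw⟩

lemma integral_integral_kernel_mul_mul_swap (hP : Continuous (uncurry P)) (hv : Continuous v)
    (hw : Continuous w) (l r : ℝ) :
    ∫ x in l..r, (∫ ξ in l..x, P x ξ * w ξ) * v x
      = ∫ x in l..r, w x * ∫ ξ in x..r, P ξ x * v ξ := by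
  simp only [← intervalIntegral.integral_mul_const, ← intervalIntegral.integral_const_mul]
  rw [integral_integral_triangle_swap (F := fun x ξ => P x ξ * w ξ * v x)
    ((hP.mul (hw.comp continuous_snd)).mul (hv.comp continuous_fst))]
  congr! 4
  ring

theorem integral_kernelOp_mul (hP1 : Continuous (uncurry P1)) (hP2 : Continuous (uncurry P2))
    (hv : Continuous v) (hw : Continuous w) :
    ∫ x in l..r, kernelOp l r P1 P2 w x * v x
      = ∫ x in l..r, w x * kernelOp l r (fun x ξ => P2 ξ x) (fun x ξ => P1 ξ x) v x := by
  have hP1' : Continuous (uncurry fun x ξ => P1 ξ x) := hP1.comp continuous_swap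
  have hP2' : Continuous (uncurry fun x ξ => P2 ξ x) := hP2.comp continuous_swap
  simp only [kernelOp, add_mul, mul_add]
  rw [intervalIntegral.integral_add, intervalIntegral.integral_add,
    integral_integral_kernel_mul_mul_swap hP1 hv hw, add_comm]
  · simpa [mul_comm] using (integral_integral_kernel_mul_mul_swap hP2' hw hv l r).symm
  · exact (hw.mul (continuous_integral_kernel_mul_right hP2' hv l)).intervalIntegrable l r
  · exact (hw.mul (continuous_integral_kernel_mul_left hP1' hv r)).intervalIntegrable l r
  · exact ((continuous_integral_kernel_mul_right hP1 hw l).mul hv).intervalIntegrable l r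
  · exact ((continuous_integral_kernel_mul_left hP2 hw r).mul hv).intervalIntegrable l r

-- Only the symmetric part of an operator contributes to its quadratic form.
lemma two_mul_integral_kernelOp_mul_self (hP1 : Continuous (uncurry P1))
    (hP2 : Continuous (uncurry P2)) (hw : Continuous w) :
    2 * ∫ x in l..r, kernelOp l r P1 P2 w x * w x
      = ∫ x in l..r, kernelOp l r (fun x ξ => P1 x ξ + P2 ξ x) (fun x ξ => P2 x ξ + P1 ξ x) w x
          * w x := by
  have hP1' : Continuous (uncurry fun x ξ => P1 ξ x) := hP1.comp continuous_swap
  have hP2' : Continuous (uncurry fun x ξ => P2 ξ x) := hP2.comp continuous_swap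
  have hform {R1 R2 : ℝ → ℝ → ℝ} (hR1 : Continuous (uncurry R1)) (hR2 : Continuous (uncurry R2)) :
      IntervalIntegrable (fun x => kernelOp l r R1 R2 w x * w x) volume l r :=
    ((continuous_kernelOp hR1 hR2 hw).mul hw).intervalIntegrable l r
  simp only [kernelOp_add hP1 hP2 hP2' hP1' hw, add_mul]
  rw [intervalIntegral.integral_add (hform hP1 hP2) (hform hP2' hP1'), two_mul]
  congr 1
  simpa only [mul_comm] using integral_kernelOp_mul hP1 hP2 hw hw

end KernelOperator

section SecondOrderOperator

/-- The differential operator `(Aw)(x) = a(x)w''(x) + b(x)w'(x) + c(x)w(x)`. -/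
def diffOp (a b c w : ℝ → ℝ) (x : ℝ) : ℝ :=
  a x * iteratedDeriv 2 w x + b x * deriv w x + c x * w x

/-- The formal adjoint `A*v = ((av)' - bv)' + cv` of `diffOp a b c`. -/
def formalAdjoint (a b c v : ℝ → ℝ) (x : ℝ) : ℝ :=
  deriv (fun t => deriv (fun s => a s * v s) t - b t * v t) x + c x * v x

/-- The bilinear concomitant `avw' - (av)'w + bvw` of `diffOp a b c`: the boundary term in Green's
formula, with `(av)'` expanded by the product rule. -/
def concomitant (a b v w : ℝ → ℝ) (x : ℝ) : ℝ :=
  a x * v x * deriv w x + ((b x - deriv a x) * v x - a x * deriv v x) * w x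

variable {a b c v w N : ℝ → ℝ} {l r : ℝ}

lemma continuous_diffOp (ha : Continuous a) (hb : Continuous b) (hc : Continuous c)
    (hw : ContDiff ℝ 2 w) : Continuous (diffOp a b c w) :=
  ((ha.mul (hw.continuous_iteratedDeriv 2 le_rfl)).add
    (hb.mul (hw.continuous_deriv one_le_two))).add (hc.mul hw.continuous)

lemma contDiff_one_deriv_mul_sub_mul (ha : ContDiff ℝ 2 a) (hb : ContDiff ℝ 1 b)
    (hv : ContDiff ℝ 2 v) :
    ContDiff ℝ 1 fun t => deriv (fun s => a s * v s) t - b t * v t :=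
  (ContDiff.deriv' (n := 1) (ha.mul hv)).sub (hb.mul (hv.of_le one_le_two))

lemma continuous_formalAdjoint (ha : ContDiff ℝ 2 a) (hb : ContDiff ℝ 1 b) (hc : Continuous c)
    (hv : ContDiff ℝ 2 v) : Continuous (formalAdjoint a b c v) :=
  ((contDiff_one_deriv_mul_sub_mul ha hb hv).continuous_deriv le_rfl).add (hc.mul hv.continuous)

theorem hasDerivAt_concomitant (ha : ContDiff ℝ 2 a) (hb : ContDiff ℝ 1 b) (hv : ContDiff ℝ 2 v)
    (hw : ContDiff ℝ 2 w) (c : ℝ → ℝ) (x : ℝ) :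
    HasDerivAt (concomitant a b v w)
      (diffOp a b c w x * v x - w x * formalAdjoint a b c v x) x := by
  have hasDeriv {f : ℝ → ℝ} (hf : ContDiff ℝ 2 f) (y : ℝ) : HasDerivAt f (deriv f y) y :=
    (hf.differentiable two_ne_zero y).hasDerivAt
  have hav : deriv (fun s => a s * v s) = fun t => deriv a t * v t + a t * deriv v t :=
    funext fun t => ((hasDeriv ha t).mul (hasDeriv hv t)).deriv
  have hflux : concomitant a b v w = fun t =>
      a t * v t * deriv w t - (deriv (fun s => a s * v s) t - b t * v t) * w t := by
    ext t
    rw [hav, concomitant]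
    ring
  have hw' : HasDerivAt (deriv w) (iteratedDeriv 2 w x) x := by
    rw [iteratedDeriv_succ, iteratedDeriv_one]
    exact ((ContDiff.deriv' (n := 1) hw).differentiable one_ne_zero x).hasDerivAt
  have hflux' := ((contDiff_one_deriv_mul_sub_mul ha hb hv).differentiable
    one_ne_zero x).hasDerivAt
  rw [hflux]
  refine ((((hasDeriv ha x).fun_mul (hasDeriv hv x)).fun_mul hw').fun_sub
    (hflux'.fun_mul (hasDeriv hw x))).congr_deriv ?_
  rw [hav, diffOp, formalAdjoint, hav]
  ring

theorem integral_diffOp_mul (ha : ContDiff ℝ 2 a) (hb : ContDiff ℝ 1 b) (hc : Continuous c)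
    (hv : ContDiff ℝ 2 v) (hw : ContDiff ℝ 2 w) :
    ∫ x in l..r, diffOp a b c w x * v x
      = (∫ x in l..r, w x * formalAdjoint a b c v x)
        + (concomitant a b v w r - concomitant a b v w l) := by
  have hA := ((continuous_diffOp ha.continuous hb.continuous hc hw).fun_mul
    hv.continuous).intervalIntegrable (μ := volume) l r
  have hA' := (hw.continuous.fun_mul
    (continuous_formalAdjoint ha hb hc hv)).intervalIntegrable (μ := volume) l r
  rw [← intervalIntegral.integral_eq_sub_of_hasDerivAt
    (fun x _ => hasDerivAt_concomitant ha hb hv hw c x) (hA.sub hA'),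
    intervalIntegral.integral_sub hA hA']
  ring

lemma diffOp_sq (hw : ContDiff ℝ 2 w) (x : ℝ) :
    diffOp a b c (fun t => w t ^ 2) x
      = 2 * (diffOp a b c w x * w x) + 2 * (a x * deriv w x ^ 2) - c x * w x ^ 2 := by
  have hderiv (t : ℝ) : HasDerivAt w (deriv w t) t :=
    (hw.differentiable two_ne_zero t).hasDerivAt
  have hderiv₂ : HasDerivAt (deriv w) (deriv (deriv w) x) x :=
    ((ContDiff.deriv' (n := 1) hw).differentiable one_ne_zero x).hasDerivAt
  have hsq : deriv (fun t => w t ^ 2) = fun t => 2 * w t * deriv w t := funext fun t => by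
    simpa using ((hderiv t).fun_pow 2).deriv
  have hsq₂ : deriv (fun t => 2 * w t * deriv w t) x
      = 2 * deriv w x * deriv w x + 2 * w x * deriv (deriv w) x :=
    (((hderiv x).const_mul 2).fun_mul hderiv₂).deriv
  simp only [diffOp, iteratedDeriv_succ, iteratedDeriv_zero, hsq, hsq₂]
  ring

-- Green's formula for `N` and `w²`.
theorem two_mul_integral_diffOp_mul_mul_self (ha : ContDiff ℝ 2 a) (hb : ContDiff ℝ 1 b)
    (hc : Continuous c) (hN : ContDiff ℝ 2 N) (hw : ContDiff ℝ 2 w) :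
    2 * ∫ x in l..r, diffOp a b c w x * (N x * w x)
      = (∫ x in l..r, (formalAdjoint a b c N x + c x * N x) * w x ^ 2)
        - 2 * (∫ x in l..r, a x * N x * deriv w x ^ 2)
        + (concomitant a b N (fun t => w t ^ 2) r - concomitant a b N (fun t => w t ^ 2) l) := by
  have hAw := continuous_diffOp ha.continuous hb.continuous hc hw
  have hAN := continuous_formalAdjoint ha hb hc hN
  have hw' := hw.continuous_deriv one_le_two
  have hac := ha.continuous
  have hNc := hN.continuous
  have hwc := hw.continuous
  have hdiffOp_sq : ∫ x in l..r, diffOp a b c (fun t => w t ^ 2) x * N x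
      = 2 * (∫ x in l..r, diffOp a b c w x * (N x * w x))
        + 2 * (∫ x in l..r, a x * N x * deriv w x ^ 2) - ∫ x in l..r, c x * N x * w x ^ 2 := by
    simp only [diffOp_sq hw, ← intervalIntegral.integral_const_mul]
    rw [← intervalIntegral.integral_add (Continuous.intervalIntegrable (by fun_prop) _ _)
      (Continuous.intervalIntegrable (by fun_prop) _ _),
      ← intervalIntegral.integral_sub (Continuous.intervalIntegrable (by fun_prop) _ _)
      (Continuous.intervalIntegrable (by fun_prop) _ _)]
    congr! 2
    ring
  have hadjoint : ∫ x in l..r, (formalAdjoint a b c N x + c x * N x) * w x ^ 2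
      = (∫ x in l..r, w x ^ 2 * formalAdjoint a b c N x) + ∫ x in l..r, c x * N x * w x ^ 2 := by
    rw [← intervalIntegral.integral_add (Continuous.intervalIntegrable (by fun_prop) _ _)
      (Continuous.intervalIntegrable (by fun_prop) _ _)]
    congr! 2
    ring
  linarith [integral_diffOp_mul (l := l) (r := r) ha hb hc hN (hw.pow 2)]

end SecondOrderOperator

section GreenKernelOperator

/-- The kernel obtained by applying the formal adjoint of `diffOp a b c` to the kernel `P(x, ξ)` in
its first variable. -/
def adjointKernel (a b c : ℝ → ℝ) (P : ℝ → ℝ → ℝ) (x ξ : ℝ) : ℝ :=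
  formalAdjoint a b c (fun t => P t ξ) x

/-- The kernel `A*ₓP1(x, ξ) + A*_ξP2(ξ, x)` of the quadratic form `2⟨Aw, Kw⟩` below the diagonal,
where `A = diffOp a b c` and `K = kernelOp l r P1 P2`; above the diagonal `P1` and `P2` trade
places. -/
def symmAdjointKernel (a b c : ℝ → ℝ) (P1 P2 : ℝ → ℝ → ℝ) (x ξ : ℝ) : ℝ :=
  adjointKernel a b c P1 x ξ + adjointKernel a b c P2 ξ x

variable {a b c w : ℝ → ℝ} {P P1 P2 : ℝ → ℝ → ℝ} {l r : ℝ}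

lemma contDiff_one_uncurry_partialFst_mul_sub_mul (ha : ContDiff ℝ 2 a) (hb : ContDiff ℝ 1 b)
    (hP : ContDiff ℝ 2 (uncurry P)) :
    ContDiff ℝ 1 (uncurry fun x ξ => partialFst (fun t ξ => a t * P t ξ) x ξ - b x * P x ξ) :=
  (contDiff_uncurry_partialFst (n := 1) (contDiff_uncurry_mul ha hP)).sub
    (contDiff_uncurry_mul hb (hP.of_le one_le_two))

lemma continuous_uncurry_adjointKernel (ha : ContDiff ℝ 2 a) (hb : ContDiff ℝ 1 b)
    (hc : Continuous c) (hP : ContDiff ℝ 2 (uncurry P)) :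
    Continuous (uncurry (adjointKernel a b c P)) :=
  (continuous_uncurry_partialFst (contDiff_one_uncurry_partialFst_mul_sub_mul ha hb hP)).add
    (continuous_uncurry_mul hc hP.continuous)

lemma continuous_uncurry_symmAdjointKernel (ha : ContDiff ℝ 2 a) (hb : ContDiff ℝ 1 b)
    (hc : Continuous c) (hP1 : ContDiff ℝ 2 (uncurry P1)) (hP2 : ContDiff ℝ 2 (uncurry P2)) :
    Continuous (uncurry (symmAdjointKernel a b c P1 P2)) :=
  (continuous_uncurry_adjointKernel ha hb hc hP1).add
    ((continuous_uncurry_adjointKernel ha hb hc hP2).comp continuous_swap)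

lemma deriv_mul_sub_eq_partialFst_sub (ha : ContDiff ℝ 1 a) (hP1 : ContDiff ℝ 1 (uncurry P1))
    (hP2 : ContDiff ℝ 1 (uncurry P2)) (x ξ : ℝ) :
    deriv (fun t => a t * (P1 t ξ - P2 t ξ)) x
      = partialFst (fun t ξ => a t * P1 t ξ) x ξ - partialFst (fun t ξ => a t * P2 t ξ) x ξ := by
  simp only [mul_sub]
  exact ((hasDerivAt_partialFst (contDiff_uncurry_mul ha hP1) x ξ).fun_sub
    (hasDerivAt_partialFst (contDiff_uncurry_mul ha hP2) x ξ)).deriv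

lemma continuous_deriv_mul_sub_diag (ha : ContDiff ℝ 1 a) (hP1 : ContDiff ℝ 1 (uncurry P1))
    (hP2 : ContDiff ℝ 1 (uncurry P2)) :
    Continuous fun x => deriv (fun t => a t * (P1 t x - P2 t x)) x :=
  (continuous_uncurry_partialFst (contDiff_uncurry_mul (P := fun t ξ => P1 t ξ - P2 t ξ) ha
    (hP1.sub hP2))).comp (continuous_id.prodMk continuous_id)

-- The kernel is continuous across the diagonal, so a local term appears only at second order.
theorem formalAdjoint_kernelOp (ha : ContDiff ℝ 2 a) (hb : ContDiff ℝ 1 b) (hc : Continuous c)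
    (hP1 : ContDiff ℝ 2 (uncurry P1)) (hP2 : ContDiff ℝ 2 (uncurry P2))
    (hdiag : ∀ x, P1 x x = P2 x x) (hw : Continuous w) (x : ℝ) :
    formalAdjoint a b c (kernelOp l r P1 P2 w) x
      = deriv (fun t => a t * (P1 t x - P2 t x)) x * w x
        + kernelOp l r (adjointKernel a b c P1) (adjointKernel a b c P2) w x := by
  have haP {P : ℝ → ℝ → ℝ} (hP : ContDiff ℝ 2 (uncurry P)) :
      ContDiff ℝ 1 (uncurry fun t ξ => a t * P t ξ) :=
    contDiff_uncurry_mul (ha.of_le one_le_two) (hP.of_le one_le_two)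
  have hbP {P : ℝ → ℝ → ℝ} (hP : ContDiff ℝ 2 (uncurry P)) :
      Continuous (uncurry fun t ξ => b t * P t ξ) :=
    continuous_uncurry_mul hb.continuous hP.continuous
  have hflux₁ := contDiff_one_uncurry_partialFst_mul_sub_mul ha hb hP1
  have hflux₂ := contDiff_one_uncurry_partialFst_mul_sub_mul ha hb hP2
  have hflux : (fun t => deriv (fun s => a s * kernelOp l r P1 P2 w s) t
        - b t * kernelOp l r P1 P2 w t)
      = kernelOp l r (fun x ξ => partialFst (fun t ξ => a t * P1 t ξ) x ξ - b x * P1 x ξ)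
          (fun x ξ => partialFst (fun t ξ => a t * P2 t ξ) x ξ - b x * P2 x ξ) w := by
    ext t
    rw [kernelOp_sub (continuous_uncurry_partialFst (haP hP1))
      (continuous_uncurry_partialFst (haP hP2)) (hbP hP1)
      (hbP hP2) hw, kernelOp_mul_left b, ← kernelOp_mul_left a,
      (hasDerivAt_kernelOp_of_eq_diag (haP hP1) (haP hP2) (fun x => by rw [hdiag]) hw t).deriv]
  rw [formalAdjoint, hflux, (hasDerivAt_kernelOp hflux₁ hflux₂ hw x).deriv,
    deriv_mul_sub_eq_partialFst_sub (ha.of_le one_le_two) (hP1.of_le one_le_two)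
      (hP2.of_le one_le_two), hdiag, sub_sub_sub_cancel_right, add_assoc]
  congr 1
  rw [← congrFun (kernelOp_mul_left c) x, ← kernelOp_add (continuous_uncurry_partialFst hflux₁)
    (continuous_uncurry_partialFst hflux₂) (continuous_uncurry_mul hc hP1.continuous)
    (continuous_uncurry_mul hc hP2.continuous) hw]
  rfl

theorem two_mul_integral_diffOp_mul_kernelOp (ha : ContDiff ℝ 2 a) (hb : ContDiff ℝ 1 b)
    (hc : Continuous c) (hP1 : ContDiff ℝ 2 (uncurry P1)) (hP2 : ContDiff ℝ 2 (uncurry P2))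
    (hdiag : ∀ x, P1 x x = P2 x x) (hw : ContDiff ℝ 2 w) :
    2 * ∫ x in l..r, diffOp a b c w x * kernelOp l r P1 P2 w x
      = (∫ x in l..r, 2 * deriv (fun t => a t * (P1 t x - P2 t x)) x * w x ^ 2)
        + (∫ x in l..r, kernelOp l r (symmAdjointKernel a b c P1 P2)
            (symmAdjointKernel a b c P2 P1) w x * w x)
        + 2 * (concomitant a b (kernelOp l r P1 P2 w) w r
          - concomitant a b (kernelOp l r P1 P2 w) w l) := by
  have hQ1 := continuous_uncurry_adjointKernel ha hb hc hP1
  have hQ2 := continuous_uncurry_adjointKernel ha hb hc hP2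
  have hwc := hw.continuous
  have hQw := continuous_kernelOp (l := l) (r := r) hQ1 hQ2 hwc
  have hjump := continuous_deriv_mul_sub_diag (ha.of_le one_le_two) (hP1.of_le one_le_two)
    (hP2.of_le one_le_two)
  unfold symmAdjointKernel
  rw [integral_diffOp_mul ha hb hc (contDiff_two_kernelOp hP1 hP2 hdiag hwc) hw, mul_add,
    ← two_mul_integral_kernelOp_mul_self hQ1 hQ2 hwc, ← intervalIntegral.integral_const_mul,
    ← intervalIntegral.integral_const_mul, ← intervalIntegral.integral_add
      (Continuous.intervalIntegrable (by fun_prop) _ _)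
      (Continuous.intervalIntegrable (by fun_prop) _ _)]
  congr! 3
  rw [formalAdjoint_kernelOp ha hb hc hP1 hP2 hdiag hwc]
  ring

end GreenKernelOperator

section OperatorInequality

variable {a b c w N : ℝ → ℝ} {P P1 P2 : ℝ → ℝ → ℝ} {l r κ : ℝ}

lemma integral_sub_const_sq (hw : Continuous w) (k : ℝ) :
    ∫ x in l..r, (w x - k) ^ 2
      = (∫ x in l..r, w x ^ 2) - 2 * k * (∫ x in l..r, w x) + (r - l) * k ^ 2 := by
  have hexpand (x : ℝ) : (w x - k) ^ 2 = w x ^ 2 - 2 * k * w x + k ^ 2 := by ring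
  simp only [hexpand]
  rw [intervalIntegral.integral_add (Continuous.intervalIntegrable (by fun_prop) _ _)
      intervalIntegrable_const,
    intervalIntegral.integral_sub (Continuous.intervalIntegrable (by fun_prop) _ _)
      (Continuous.intervalIntegrable (by fun_prop) _ _),
    intervalIntegral.integral_const_mul, intervalIntegral.integral_const, smul_eq_mul]

lemma mul_integral_sub_left_sq_le (hlr : l < r) (hw : ContDiff ℝ 1 w) {p : ℝ → ℝ}
    (hp : Continuous p) (hκ : 0 ≤ κ) (hκp : ∀ x ∈ Set.Icc l r, κ ≤ p x) :
    κ * ((π / (2 * (r - l))) ^ 2 * ∫ x in l..r, (w x - w l) ^ 2)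
      ≤ ∫ x in l..r, p x * deriv w x ^ 2 := by
  have hw' : Continuous (deriv w) := hw.continuous_deriv le_rfl
  calc κ * ((π / (2 * (r - l))) ^ 2 * ∫ x in l..r, (w x - w l) ^ 2)
      ≤ κ * ∫ x in l..r, deriv w x ^ 2 := by
        refine mul_le_mul_of_nonneg_left (wirtinger_inequality hlr (fun x _ => ?_)
          hw'.continuousOn (sub_self _)) hκ
        exact (hw.differentiable one_ne_zero x).hasDerivAt.sub_const _
    _ = ∫ x in l..r, κ * deriv w x ^ 2 := (intervalIntegral.integral_const_mul _ _).symm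
    _ ≤ ∫ x in l..r, p x * deriv w x ^ 2 :=
        intervalIntegral.integral_mono_on hlr.le (Continuous.intervalIntegrable (by fun_prop) _ _)
          (Continuous.intervalIntegrable (by fun_prop) _ _) fun x hx =>
            mul_le_mul_of_nonneg_right (hκp x hx) (sq_nonneg _)

/-- The coefficient of the local part `w(x)²` of the quadratic form `2⟨Aw, Nw + Kw⟩`, where
`A = diffOp a b c` and `K = kernelOp l r P1 P2`. -/
def symmAdjointMultiplier (a b c N : ℝ → ℝ) (P1 P2 : ℝ → ℝ → ℝ) (x : ℝ) : ℝ :=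
  formalAdjoint a b c N x + c x * N x + 2 * deriv (fun t => a t * (P1 t x - P2 t x)) x

lemma continuous_symmAdjointMultiplier (ha : ContDiff ℝ 2 a) (hb : ContDiff ℝ 1 b)
    (hc : Continuous c) (hN : ContDiff ℝ 2 N) (hP1 : ContDiff ℝ 1 (uncurry P1))
    (hP2 : ContDiff ℝ 1 (uncurry P2)) : Continuous (symmAdjointMultiplier a b c N P1 P2) :=
  ((continuous_formalAdjoint ha hb hc hN).add (hc.mul hN.continuous)).add
    (continuous_const.mul (continuous_deriv_mul_sub_diag (ha.of_le one_le_two) hP1 hP2))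

lemma semisepOp_eq_add_kernelOp (N : ℝ → ℝ) (P1 P2 : ℝ → ℝ → ℝ) (w : ℝ → ℝ) (x : ℝ) :
    semisepOp N P1 P2 w x = N x * w x + kernelOp 0 1 P1 P2 w x :=
  add_assoc _ _ _

lemma integral_semisepOp_sub_const_mul_self {m : ℝ → ℝ} (hm : Continuous m)
    (hP1 : Continuous (uncurry P1)) (hP2 : Continuous (uncurry P2)) (hw : Continuous w) (k : ℝ) :
    ∫ x in l..r, semisepOp (fun x => m x - k) P1 P2 w x * w x
      = (∫ x in l..r, semisepOp m P1 P2 w x * w x) - k * ∫ x in l..r, w x ^ 2 := by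
  have hK := continuous_kernelOp (l := 0) (r := 1) hP1 hP2 hw
  simp only [semisepOp_eq_add_kernelOp]
  rw [← intervalIntegral.integral_const_mul, ← intervalIntegral.integral_sub
    (Continuous.intervalIntegrable (by fun_prop) _ _)
    (Continuous.intervalIntegrable (by fun_prop) _ _)]
  congr! 2
  ring

/-- The boundary form of `∫ diffOp a b c w * (N w + K w)`, `K = kernelOp l r P1 P2`: the function
whose increment over `[l, r]` is the boundary term of twice that integral. -/
def boundaryForm (l r : ℝ) (a b N : ℝ → ℝ) (P1 P2 : ℝ → ℝ → ℝ) (w : ℝ → ℝ) (x : ℝ) : ℝ :=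
  concomitant a b N (fun t => w t ^ 2) x + 2 * concomitant a b (kernelOp l r P1 P2 w) w x

/-- The kernel of the integral functional that multiplies `w(x)` in `boundaryForm`. -/
def boundaryKernel (a b : ℝ → ℝ) (P : ℝ → ℝ → ℝ) (x ξ : ℝ) : ℝ :=
  2 * (b x - deriv a x) * P x ξ - 2 * a x * partialFst P x ξ

lemma continuous_uncurry_boundaryKernel (ha : ContDiff ℝ 1 a) (hb : Continuous b)
    (hP : ContDiff ℝ 1 (uncurry P)) : Continuous (uncurry (boundaryKernel a b P)) :=
  (continuous_uncurry_mul (continuous_const.mul (hb.sub (ha.continuous_deriv le_rfl)))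
    hP.continuous).sub
    (continuous_uncurry_mul (continuous_const.mul ha.continuous)
      (continuous_uncurry_partialFst hP))

lemma boundaryForm_eq (ha : ContDiff ℝ 1 a) (hb : Continuous b) (hP1 : ContDiff ℝ 1 (uncurry P1))
    (hP2 : ContDiff ℝ 1 (uncurry P2)) (hdiag : ∀ x, P1 x x = P2 x x) (hw : ContDiff ℝ 1 w)
    (x : ℝ) :
    boundaryForm l r a b N P1 P2 w x
      = w x * (((b x - deriv a x) * N x - a x * deriv N x) * w x
          + kernelOp l r (boundaryKernel a b P1) (boundaryKernel a b P2) w x)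
        + deriv w x * (2 * a x * N x * w x
          + kernelOp l r (fun x ξ => 2 * a x * P1 x ξ) (fun x ξ => 2 * a x * P2 x ξ) w x) := by
  have hwc := hw.continuous
  have hsq : deriv (fun t => w t ^ 2) x = 2 * w x * deriv w x := by
    simpa using ((hw.differentiable one_ne_zero x).hasDerivAt.fun_pow 2).deriv
  have hkernel : kernelOp l r (boundaryKernel a b P1) (boundaryKernel a b P2) w x
      = 2 * (b x - deriv a x) * kernelOp l r P1 P2 w x
        - 2 * a x * kernelOp l r (partialFst P1) (partialFst P2) w x := by
    have hba : Continuous fun x => 2 * (b x - deriv a x) :=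
      continuous_const.mul (hb.sub (ha.continuous_deriv le_rfl))
    have ha₂ : Continuous fun x => 2 * a x := continuous_const.mul ha.continuous
    rw [← congrFun (kernelOp_mul_left fun x => 2 * (b x - deriv a x)) x,
      ← congrFun (kernelOp_mul_left fun x => 2 * a x) x,
      ← kernelOp_sub (continuous_uncurry_mul hba hP1.continuous)
        (continuous_uncurry_mul hba hP2.continuous)
        (continuous_uncurry_mul ha₂ (continuous_uncurry_partialFst hP1))
        (continuous_uncurry_mul ha₂ (continuous_uncurry_partialFst hP2)) hwc]
    rfl
  rw [boundaryForm, concomitant, concomitant, hsq, hkernel, kernelOp_mul_left fun x => 2 * a x,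
    (hasDerivAt_kernelOp_of_eq_diag hP1 hP2 hdiag hwc x).deriv]
  ring

theorem two_mul_integral_diffOp_mul_add_kernelOp (ha : ContDiff ℝ 2 a) (hb : ContDiff ℝ 1 b)
    (hc : Continuous c) (hN : ContDiff ℝ 2 N) (hP1 : ContDiff ℝ 2 (uncurry P1))
    (hP2 : ContDiff ℝ 2 (uncurry P2)) (hdiag : ∀ x, P1 x x = P2 x x) (hw : ContDiff ℝ 2 w) :
    2 * ∫ x in l..r, diffOp a b c w x * (N x * w x + kernelOp l r P1 P2 w x)
      = (∫ x in l..r, (symmAdjointMultiplier a b c N P1 P2 x * w x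
          + kernelOp l r (symmAdjointKernel a b c P1 P2) (symmAdjointKernel a b c P2 P1) w x)
            * w x)
        - 2 * (∫ x in l..r, a x * N x * deriv w x ^ 2)
        + (boundaryForm l r a b N P1 P2 w r - boundaryForm l r a b N P1 P2 w l) := by
  have hwc := hw.continuous
  have hNc := hN.continuous
  have hAw := continuous_diffOp ha.continuous hb.continuous hc hw
  have hAN := continuous_formalAdjoint ha hb hc hN
  have hK := continuous_kernelOp (l := l) (r := r) hP1.continuous hP2.continuous hwc
  have hjump := continuous_deriv_mul_sub_diag (ha.of_le one_le_two) (hP1.of_le one_le_two)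
    (hP2.of_le one_le_two)
  have hQw := continuous_kernelOp (l := l) (r := r)
    (continuous_uncurry_symmAdjointKernel ha hb hc hP1 hP2)
    (continuous_uncurry_symmAdjointKernel ha hb hc hP2 hP1) hwc
  have hsplit : ∫ x in l..r, diffOp a b c w x * (N x * w x + kernelOp l r P1 P2 w x)
      = (∫ x in l..r, diffOp a b c w x * (N x * w x))
        + ∫ x in l..r, diffOp a b c w x * kernelOp l r P1 P2 w x := by
    simp only [mul_add]
    exact intervalIntegral.integral_add (Continuous.intervalIntegrable (by fun_prop) _ _)
      (Continuous.intervalIntegrable (by fun_prop) _ _)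
  have hcollect : ∫ x in l..r, (symmAdjointMultiplier a b c N P1 P2 x * w x
        + kernelOp l r (symmAdjointKernel a b c P1 P2) (symmAdjointKernel a b c P2 P1) w x) * w x
      = (∫ x in l..r, (formalAdjoint a b c N x + c x * N x) * w x ^ 2)
        + (∫ x in l..r, 2 * deriv (fun t => a t * (P1 t x - P2 t x)) x * w x ^ 2)
        + ∫ x in l..r, kernelOp l r (symmAdjointKernel a b c P1 P2)
            (symmAdjointKernel a b c P2 P1) w x * w x := by
    rw [← intervalIntegral.integral_add (Continuous.intervalIntegrable (by fun_prop) _ _)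
        (Continuous.intervalIntegrable (by fun_prop) _ _),
      ← intervalIntegral.integral_add (Continuous.intervalIntegrable (by fun_prop) _ _)
        (Continuous.intervalIntegrable (by fun_prop) _ _)]
    congr! 2 with x
    rw [symmAdjointMultiplier]
    ring
  rw [hsplit, hcollect, mul_add, two_mul_integral_diffOp_mul_mul_self ha hb hc hN hw,
    two_mul_integral_diffOp_mul_kernelOp ha hb hc hP1 hP2 hdiag hw, boundaryForm, boundaryForm]
  ring

theorem primal_linear_operator_inequality_general (ha : ContDiff ℝ 2 a) (hb : ContDiff ℝ 1 b)
    (hc : Continuous c) (hN : ContDiff ℝ 2 N) (hP1 : ContDiff ℝ 2 (uncurry P1))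
    (hP2 : ContDiff ℝ 2 (uncurry P2)) (hdiag : ∀ x, P1 x x = P2 x x) (hκ : 0 ≤ κ)
    (hκaN : ∀ x ∈ Set.Icc (0 : ℝ) 1, κ ≤ a x * N x)
    {Q0 Q4 Q6 Q8 : ℝ → ℝ} {Q1 Q2 : ℝ → ℝ → ℝ} {Q3 Q5 Q7 : ℝ}
    (hQ0 : ∀ x, Q0 x = symmAdjointMultiplier a b c N P1 P2 x - π ^ 2 / 2 * κ)
    (hQ1 : ∀ x ξ, Q1 x ξ = symmAdjointKernel a b c P1 P2 x ξ)
    (hQ2 : ∀ x ξ, Q2 x ξ = symmAdjointKernel a b c P2 P1 x ξ)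
    (hQ3 : Q3 = (deriv a 0 - b 0) * N 0 + a 0 * deriv N 0 - π ^ 2 / 2 * κ)
    (hQ4 : ∀ x, Q4 x = -boundaryKernel a b P2 0 x + π ^ 2 * κ)
    (hQ5 : Q5 = (b 1 - deriv a 1) * N 1 - a 1 * deriv N 1)
    (hQ6 : ∀ x, Q6 x = boundaryKernel a b P1 1 x)
    (hQ7 : Q7 = 2 * a 1 * N 1) (hQ8 : ∀ x, Q8 x = 2 * a 1 * P1 1 x)
    (hw : ContDiff ℝ 2 w) (hw0 : deriv w 0 = 0) :
    2 * (∫ x in (0 : ℝ)..1, diffOp a b c w x * semisepOp N P1 P2 w x)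
      ≤ (∫ x in (0 : ℝ)..1, semisepOp Q0 Q1 Q2 w x * w x)
        + w 0 * (Q3 * w 0 + ∫ x in (0 : ℝ)..1, Q4 x * w x)
        + w 1 * (Q5 * w 1 + ∫ x in (0 : ℝ)..1, Q6 x * w x)
        + deriv w 1 * (Q7 * w 1 + ∫ x in (0 : ℝ)..1, Q8 x * w x) := by
  have hwc := hw.continuous
  have hP1' : ContDiff ℝ 1 (uncurry P1) := hP1.of_le one_le_two
  have hP2' : ContDiff ℝ 1 (uncurry P2) := hP2.of_le one_le_two
  have hboundary := boundaryForm_eq (l := 0) (r := 1) (N := N) (ha.of_le one_le_two) hb.continuous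
    hP1' hP2' hdiag (hw.of_le one_le_two)
  have hidentity := two_mul_integral_diffOp_mul_add_kernelOp (l := 0) (r := 1) ha hb hc hN hP1 hP2
    hdiag hw
  have henergy := mul_integral_sub_left_sq_le one_pos (hw.of_le one_le_two)
    (ha.continuous.fun_mul hN.continuous) hκ hκaN
  have hbulk := integral_semisepOp_sub_const_mul_self (l := 0) (r := 1)
    (continuous_symmAdjointMultiplier ha hb hc hN hP1' hP2')
    (continuous_uncurry_symmAdjointKernel ha hb hc hP1 hP2)
    (continuous_uncurry_symmAdjointKernel ha hb hc hP2 hP1) hwc (π ^ 2 / 2 * κ)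
  have hQ4w : ∫ x in (0 : ℝ)..1, Q4 x * w x
      = -(∫ x in (0 : ℝ)..1, boundaryKernel a b P2 0 x * w x)
        + π ^ 2 * κ * ∫ x in (0 : ℝ)..1, w x := by
    have hB := (continuous_uncurry_boundaryKernel (ha.of_le one_le_two) hb.continuous
      hP2').uncurry_left 0
    simp only [hQ4, add_mul, neg_mul]
    rw [intervalIntegral.integral_add (Continuous.intervalIntegrable (by fun_prop) _ _)
      (Continuous.intervalIntegrable (by fun_prop) _ _), intervalIntegral.integral_neg,
      intervalIntegral.integral_const_mul]
  rw [integral_sub_const_sq hwc] at henergy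
  rw [hboundary, hboundary, kernelOp_left, kernelOp_right, kernelOp_left, kernelOp_right,
    hw0] at hidentity
  simp only [← semisepOp_eq_add_kernelOp] at hidentity
  obtain rfl : Q0 = _ := funext hQ0
  obtain rfl : Q1 = _ := funext₂ hQ1
  obtain rfl : Q2 = _ := funext₂ hQ2
  simp only [hQ6, hQ8]
  rw [hidentity, hbulk, hQ3, hQ4w, hQ5, hQ7]
  linarith

end OperatorInequality

section Polynomial

lemma IsPolyFun.contDiff {f : ℝ → ℝ} (hf : IsPolyFun f) {n : WithTop ℕ∞} : ContDiff ℝ n f := by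
  obtain ⟨p, hp⟩ := hf
  rw [funext hp]
  exact (AnalyticOnNhd.eval_polynomial p).contDiff

lemma IsPolyFun2.contDiff_uncurry {P : ℝ → ℝ → ℝ} (hP : IsPolyFun2 P) {n : WithTop ℕ∞} :
    ContDiff ℝ n (uncurry P) := by
  obtain ⟨p, hp⟩ := hP
  have heval : uncurry P = fun z : ℝ × ℝ => MvPolynomial.aeval ![z.1, z.2] p :=
    funext fun z => hp z.1 z.2
  have hanalytic := AnalyticOnNhd.aeval_mvPolynomial (𝕜 := ℝ) (s := Set.univ)
    (f := fun z : ℝ × ℝ => ![z.1, z.2])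
    (Fin.forall_fin_two.2 ⟨analyticOnNhd_fst, analyticOnNhd_snd⟩) p
  exact heval ▸ hanalytic.contDiff

end Polynomial

/-- Classical form of Lemma 2 (the primal Linear Operator Inequality). -/
theorem primal_linear_operator_inequality
    (a b c : ℝ → ℝ) (α : ℝ) (hα : 0 < α)
    (ha : IsPolyFun a) (hb : IsPolyFun b) (hc : IsPolyFun c)
    (haα : ∀ x ∈ Set.Icc (0:ℝ) 1, α ≤ a x)
    (ε1 : ℝ) (hε1 : 0 < ε1)
    (N : ℝ → ℝ) (P1 P2 : ℝ → ℝ → ℝ)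
    (hNp : IsPolyFun N) (hP1p : IsPolyFun2 P1) (hP2p : IsPolyFun2 P2)
    (hsym : ∀ x ξ : ℝ, P2 x ξ = P1 ξ x)
    (hNε : ∀ x ∈ Set.Icc (0:ℝ) 1, ε1 ≤ N x)
    (Q0 Q4 Q6 Q8 : ℝ → ℝ) (Q1 Q2 : ℝ → ℝ → ℝ) (Q3 Q5 Q7 : ℝ)
    (hQ0 : ∀ x : ℝ, Q0 x =
      deriv (fun t => deriv (fun s => a s * N s) t - b t * N t) x
        + 2 * deriv (fun t => a t * (P1 t x - P2 t x)) x
        + 2 * N x * c x - π ^ 2 / 2 * α * ε1)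
    (hQ1 : ∀ x ξ : ℝ, Q1 x ξ =
      deriv (fun t => deriv (fun s => a s * P1 s ξ) t - b t * P1 t ξ) x
        + deriv (fun s => deriv (fun r => a r * P1 x r) s - b s * P1 x s) ξ
        + (c x + c ξ) * P1 x ξ)
    (hQ2 : ∀ x ξ : ℝ, Q2 x ξ = Q1 ξ x)
    (hQ3 : Q3 = (deriv a 0 - b 0) * N 0 + a 0 * deriv N 0 - π ^ 2 / 2 * α * ε1)
    (hQ4 : ∀ x : ℝ, Q4 x = 2 * (deriv a 0 - b 0) * P2 0 x
        + 2 * a 0 * deriv (fun t => P2 t x) 0 + π ^ 2 * α * ε1)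
    (hQ5 : Q5 = (b 1 - deriv a 1) * N 1 - a 1 * deriv N 1)
    (hQ6 : ∀ x : ℝ, Q6 x = 2 * (b 1 - deriv a 1) * P1 1 x
        - 2 * a 1 * deriv (fun t => P1 t x) 1)
    (hQ7 : Q7 = 2 * a 1 * N 1)
    (hQ8 : ∀ x : ℝ, Q8 x = 2 * a 1 * P1 1 x) :
    ∀ w : ℝ → ℝ, ContDiff ℝ 2 w → deriv w 0 = 0 →
      2 * (∫ x in (0:ℝ)..1,
            (a x * iteratedDeriv 2 w x + b x * deriv w x + c x * w x)
              * semisepOp N P1 P2 w x)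
        ≤ (∫ x in (0:ℝ)..1,
              (Q0 x * w x + (∫ ξ in (0:ℝ)..x, Q1 x ξ * w ξ)
                + ∫ ξ in x..(1:ℝ), Q2 x ξ * w ξ) * w x)
          + w 0 * (Q3 * w 0 + ∫ x in (0:ℝ)..1, Q4 x * w x)
          + w 1 * (Q5 * w 1 + ∫ x in (0:ℝ)..1, Q6 x * w x)
          + deriv w 1 * (Q7 * w 1 + ∫ x in (0:ℝ)..1, Q8 x * w x) := by
  intro w hw hw0
  refine primal_linear_operator_inequality_general (κ := α * ε1) ha.contDiff hb.contDiff
    (hc.contDiff (n := 0)).continuous hNp.contDiff hP1p.contDiff_uncurry hP2p.contDiff_uncurry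
    (fun x => (hsym x x).symm) (by positivity)
    (fun x hx => mul_le_mul (haα x hx) (hNε x hx) hε1.le (hα.le.trans (haα x hx)))
    (fun x => ?_) (fun x ξ => ?_) (fun x ξ => ?_) ?_ (fun x => ?_) hQ5 hQ6 hQ7 hQ8 hw hw0
  · rw [hQ0, symmAdjointMultiplier, formalAdjoint]
    ring
  · simp only [hQ1, symmAdjointKernel, adjointKernel, formalAdjoint, hsym]
    ring
  · simp only [hQ2, hQ1, symmAdjointKernel, adjointKernel, formalAdjoint, hsym]
    ring
  · rw [hQ3]
    ring
  · rw [hQ4, boundaryKernel, partialFst]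
    ring

end
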